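/- Let Z^{3⁸}(τ,z) = 2·(η(τ)⁶/η(3τ)²)·φ_{−2,1}(τ,z) be the twined elliptic genus for the M₂₄ class 3b. Then for all τ ∈ ℍ and z ∈ ℂ, the sum of the slashes of Z^{3⁸} by the matrices M_{1/3} = (1,0;3,1) and M_{2/3} = (−2,1;−3,1) (representing the two width-one cusps 1/3 and 2/3 of Γ₀(9)) equals −Z^{3⁸}: exp(−6πi z²/(3τ+1))·Z^{3⁸}( τ/(3τ+1), z/(3τ+1) ) + exp(6πi z²/(−3τ+1))·Z^{3⁸}( (−2τ+1)/(−3τ+1), z/(−3τ+1) ) = −Z^{3⁸}(τ,z). -/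

import Mathlib

open Complex


/-- The Dedekind eta function. -/
noncomputable def Eta (τ : ℂ) : ℂ :=
  Complex.exp (Real.pi * I * τ / 12) *
    ∏' n : ℕ, (1 - Complex.exp (2 * Real.pi * I * ((n : ℂ) + 1) * τ))

noncomputable def θ₁ (τ z : ℂ) : ℂ :=
  -I * ∑' n : ℤ, (-1 : ℂ) ^ n *
    Complex.exp (Real.pi * I * ((n : ℂ) + 1 / 2) ^ 2 * τ + (2 * (n : ℂ) + 1) * Real.pi * I * z)

noncomputable def θ₂ (τ z : ℂ) : ℂ :=
  ∑' n : ℤ,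
    Complex.exp (Real.pi * I * ((n : ℂ) + 1 / 2) ^ 2 * τ + (2 * (n : ℂ) + 1) * Real.pi * I * z)

noncomputable def θ₃ (τ z : ℂ) : ℂ :=
  ∑' n : ℤ, Complex.exp (Real.pi * I * (n : ℂ) ^ 2 * τ + 2 * (n : ℂ) * Real.pi * I * z)

noncomputable def θ₄ (τ z : ℂ) : ℂ :=
  ∑' n : ℤ, (-1 : ℂ) ^ n *
    Complex.exp (Real.pi * I * (n : ℂ) ^ 2 * τ + 2 * (n : ℂ) * Real.pi * I * z)

/-- The weak Jacobi form φ_{0,1}. -/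
noncomputable def φ01 (τ z : ℂ) : ℂ :=
  4 * ((θ₂ τ z / θ₂ τ 0) ^ 2 + (θ₃ τ z / θ₃ τ 0) ^ 2 + (θ₄ τ z / θ₄ τ 0) ^ 2)

/-- The weak Jacobi form φ_{−2,1}. -/
noncomputable def φm21 (τ z : ℂ) : ℂ := θ₁ τ z ^ 2 / Eta τ ^ 6

/-- Twined elliptic genus for the class 3b (cycle shape 3^8). -/
noncomputable def Z3b (τ z : ℂ) : ℂ :=
  2 * (Eta τ ^ 6 / Eta (3 * τ) ^ 2) * φm21 τ z

/-! On `ℍ × ℂ` the form is `Z(τ, z) = 2 θ₁(τ, z)² / η(3τ)²`. Both `θ₁²` (weight and index 1) and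
`η²` (weight 1, index 0) are multiplied by constants under the slashes by `S` and `T`. Since
`(1, 0; c, 1) = S T⁻ᶜ S⁻¹`, the slash by `(1, 0; c, 1)` multiplies them by the `-c`-th power of
their `T`-multipliers, which are `i` for `θ₁²` and `e^{πi/6}` for `η²`; and replacing `τ` by `3τ`
turns the action of `(1, 0; 3n, 1)` into that of `(1, 0; n, 1)`, and that of `T` into that of
`T³`. Hence `Z` is fixed by `T`, and `(1, 0; 3n, 1)` multiplies it by `ωⁿ`, where `ω = e^{2πi/3}`.
As `M_{2/3} = T · (1, 0; -3, 1)`, the sum of the two slashes is `(ω + ω⁻¹) Z = -Z`. -/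

section

open UpperHalfPlane hiding I
open ModularGroup
open scoped MatrixGroups Real

theorem add_inv_eq_neg_one_of_isPrimitiveRoot_three {K : Type*} [Field K] {ω : K}
    (hω : IsPrimitiveRoot ω 3) : ω + ω⁻¹ = -1 := by
  have hsum := hω.geom_sum_eq_zero (by norm_num)
  have hinv : ω⁻¹ = ω ^ 2 := inv_eq_of_mul_eq_one_right (by rw [← pow_succ', hω.pow_eq_one])
  rw [Finset.sum_range_succ, Finset.sum_range_succ, Finset.sum_range_one] at hsum
  rw [hinv]
  linear_combination hsum

/-- The weight-`k`, index-`m` Jacobi slash of `f : ℍ × ℂ → ℂ` by `γ`. Functions of `τ` alone are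
treated as functions of `(τ, z)`, on which the slash of index `0` is the one for modular forms. -/
noncomputable def jacobiSlash (k : ℤ) (m : ℂ) (f : ℍ → ℂ → ℂ) (γ : SL(2, ℤ)) : ℍ → ℂ → ℂ :=
  fun τ z ↦ denom γ τ ^ (-k) * exp (-2 * π * I * m * γ 1 0 * z ^ 2 / denom γ τ) *
    f (γ • τ) (z / denom γ τ)

theorem jacobiSlash_coe_apply (k : ℤ) (m : ℂ) (F : ℂ → ℂ → ℂ) (γ : SL(2, ℤ)) (τ : ℍ) (z : ℂ) :
    jacobiSlash k m (fun τ ↦ F τ) γ τ z =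
      (γ 1 0 * τ + γ 1 1 : ℂ) ^ (-k) *
        exp (-2 * π * I * m * γ 1 0 * z ^ 2 / (γ 1 0 * τ + γ 1 1)) *
        F ((γ 0 0 * τ + γ 0 1) / (γ 1 0 * τ + γ 1 1)) (z / (γ 1 0 * τ + γ 1 1)) := by
  rw [jacobiSlash, denom_apply, coe_specialLinearGroup_apply]
  rfl

theorem jacobiSlash_S_coe_apply (k : ℤ) (m : ℂ) (F : ℂ → ℂ → ℂ) (τ : ℍ) (z : ℂ) :
    jacobiSlash k m (fun τ ↦ F τ) S τ z =
      (τ : ℂ) ^ (-k) * exp (-2 * π * I * m * z ^ 2 / τ) * F (-1 / τ) (z / τ) := by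
  simp [jacobiSlash_coe_apply, coe_S]

theorem jacobiSlash_T_coe_apply (k : ℤ) (m : ℂ) (F : ℂ → ℂ → ℂ) (τ : ℍ) (z : ℂ) :
    jacobiSlash k m (fun τ ↦ F τ) T τ z = F (τ + 1) z := by
  simp [jacobiSlash_coe_apply, coe_T]

theorem jacobiSlash_one (k : ℤ) (m : ℂ) (f : ℍ → ℂ → ℂ) : jacobiSlash k m f 1 = f := by
  ext τ z
  simp [jacobiSlash]

theorem jacobiSlash_smul (k : ℤ) (m a : ℂ) (f : ℍ → ℂ → ℂ) (γ : SL(2, ℤ)) :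
    jacobiSlash k m (a • f) γ = a • jacobiSlash k m f γ := by
  ext τ z
  simp only [jacobiSlash, Pi.smul_apply, smul_eq_mul]
  ring

theorem jacobiSlash_div (k₁ k₂ : ℤ) (m₁ m₂ : ℂ) (f g : ℍ → ℂ → ℂ) (γ : SL(2, ℤ)) :
    jacobiSlash (k₁ - k₂) (m₁ - m₂) (f / g) γ =
      jacobiSlash k₁ m₁ f γ / jacobiSlash k₂ m₂ g γ := by
  ext τ z
  have hexp : exp (-2 * π * I * (m₁ - m₂) * γ 1 0 * z ^ 2 / denom γ τ) =
      exp (-2 * π * I * m₁ * γ 1 0 * z ^ 2 / denom γ τ) /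
        exp (-2 * π * I * m₂ * γ 1 0 * z ^ 2 / denom γ τ) := by
    rw [← exp_sub]
    ring_nf
  have hweight : denom γ τ ^ (-(k₁ - k₂)) = denom γ τ ^ (-k₁) / denom γ τ ^ (-k₂) := by
    rw [← zpow_sub₀ (denom_ne_zero _ _)]
    ring_nf
  simp only [jacobiSlash, Pi.div_apply, hexp, hweight, div_mul_div_comm]

theorem denom_mul (γ δ : SL(2, ℤ)) (τ : ℍ) :
    denom (γ * δ : SL(2, ℤ)) τ = denom γ ↑(δ • τ) * denom δ τ := by
  simpa [σ] using denom_cocycle_σ γ δ τ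

theorem lowerLeft_div_denom_mul (γ δ : SL(2, ℤ)) (τ : ℍ) :
    ((γ * δ) 1 0 : ℂ) / denom (γ * δ : SL(2, ℤ)) τ =
      δ 1 0 / denom δ τ + γ 1 0 / (denom γ ↑(δ • τ) * denom δ τ ^ 2) := by
  have hδ : denom δ τ ≠ 0 := denom_ne_zero _ _
  have hγ : denom γ ↑(δ • τ) ≠ 0 := denom_ne_zero _ _
  have hdet : (δ 0 0 : ℂ) * δ 1 1 - δ 0 1 * δ 1 0 = 1 := by
    exact_mod_cast (Matrix.det_fin_two δ.1).symm.trans δ.det_coe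
  have hcross : ((γ * δ) 1 0 : ℂ) * denom δ τ =
      δ 1 0 * denom (γ * δ : SL(2, ℤ)) τ + γ 1 0 := by
    simp only [denom_apply, Matrix.SpecialLinearGroup.coe_mul, Matrix.mul_apply,
      Fin.sum_univ_two]
    push_cast
    linear_combination (γ 1 0 : ℂ) * hdet
  rw [denom_mul] at hcross ⊢
  field_simp
  linear_combination hcross

theorem jacobiSlash_mul (k : ℤ) (m : ℂ) (f : ℍ → ℂ → ℂ) (γ δ : SL(2, ℤ)) :
    jacobiSlash k m f (γ * δ) = jacobiSlash k m (jacobiSlash k m f γ) δ := by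
  ext τ z
  have hexp : exp (-2 * π * I * m * (γ * δ) 1 0 * z ^ 2 / denom (γ * δ : SL(2, ℤ)) τ) =
      exp (-2 * π * I * m * δ 1 0 * z ^ 2 / denom δ τ) *
        exp (-2 * π * I * m * γ 1 0 * (z / denom δ τ) ^ 2 / denom γ ↑(δ • τ)) := by
    rw [← exp_add]
    congr 1
    linear_combination -2 * π * I * m * z ^ 2 * lowerLeft_div_denom_mul γ δ τ
  simp only [jacobiSlash, hexp]
  rw [denom_mul, mul_zpow, mul_smul, div_div, mul_comm (denom δ τ)]
  ring

-- The entry conditions say that `δ = diag(r, 1) γ diag(r, 1)⁻¹`.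
theorem jacobiSlash_comp_pos_smul (k : ℤ) (m : ℂ) (f : ℍ → ℂ → ℂ) (r : {x : ℝ // 0 < x})
    {γ δ : SL(2, ℤ)} (h₀₀ : δ 0 0 = γ 0 0) (h₀₁ : (δ 0 1 : ℝ) = r * γ 0 1)
    (h₁₀ : r * (δ 1 0 : ℝ) = γ 1 0) (h₁₁ : δ 1 1 = γ 1 1) (τ : ℍ) (z : ℂ) :
    jacobiSlash k m (fun τ ↦ f (r • τ)) γ τ z = jacobiSlash k (r * m) f δ (r • τ) z := by
  replace h₀₁ : (δ 0 1 : ℂ) = r * γ 0 1 := by exact_mod_cast congrArg ofReal h₀₁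
  replace h₁₀ : (r : ℂ) * δ 1 0 = γ 1 0 := by exact_mod_cast congrArg ofReal h₁₀
  have hdenom : denom γ τ = denom δ ↑(r • τ) := by
    rw [denom_apply, denom_apply, ← h₁₀, h₁₁, coe_pos_real_smul, real_smul]
    ring
  have hsmul : r • γ • τ = δ • r • τ := by
    ext
    rw [coe_pos_real_smul, coe_specialLinearGroup_apply, coe_specialLinearGroup_apply,
      coe_pos_real_smul]
    simp only [algebraMap_int_eq, eq_intCast, ofReal_intCast, real_smul, h₀₀, h₀₁, ← h₁₀, h₁₁]
    ring
  simp only [jacobiSlash, hsmul, hdenom, ← h₁₀]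
  ring_nf

/-- `f` is an eigenfunction of the weight-`k`, index-`m` slash by `γ`, with eigenvalue `a`: the
value at `γ` of the multiplier system of a Jacobi form. -/
def HasJacobiMultiplier (k : ℤ) (m : ℂ) (f : ℍ → ℂ → ℂ) (γ : SL(2, ℤ)) (a : ℂ) : Prop :=
  jacobiSlash k m f γ = a • f

/-- The matrix `(1, 0; c, 1)`. -/
def lowerUnipotent (c : ℤ) : SL(2, ℤ) :=
  ⟨!![1, 0; c, 1], by simp⟩

theorem coe_lowerUnipotent (c : ℤ) : (lowerUnipotent c).1 = !![1, 0; c, 1] := rfl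

theorem coe_T_mul_lowerUnipotent (c : ℤ) :
    (T * lowerUnipotent c).1 = !![1 + c, 1; c, 1] := by
  rw [Matrix.SpecialLinearGroup.coe_mul, coe_T, coe_lowerUnipotent]
  simp

theorem lowerUnipotent_eq_conj_T_zpow (c : ℤ) : lowerUnipotent c = S * T ^ (-c) * S⁻¹ := by
  rw [eq_mul_inv_iff_mul_eq]
  apply Subtype.ext
  rw [Matrix.SpecialLinearGroup.coe_mul, Matrix.SpecialLinearGroup.coe_mul, coe_S, coe_T_zpow,
    coe_lowerUnipotent]
  simp

namespace HasJacobiMultiplier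

variable {k : ℤ} {m : ℂ} {f : ℍ → ℂ → ℂ} {γ δ : SL(2, ℤ)} {a b : ℂ}

theorem mul (hγ : HasJacobiMultiplier k m f γ a) (hδ : HasJacobiMultiplier k m f δ b) :
    HasJacobiMultiplier k m f (γ * δ) (a * b) := by
  rw [HasJacobiMultiplier, jacobiSlash_mul, hγ, jacobiSlash_smul, hδ, smul_smul]

theorem inv (ha : a ≠ 0) (h : HasJacobiMultiplier k m f γ a) :
    HasJacobiMultiplier k m f γ⁻¹ a⁻¹ := by
  rw [HasJacobiMultiplier, eq_inv_smul_iff₀ ha, ← jacobiSlash_smul, ← h, ← jacobiSlash_mul,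
    mul_inv_cancel, jacobiSlash_one]

theorem pow (h : HasJacobiMultiplier k m f γ a) (n : ℕ) :
    HasJacobiMultiplier k m f (γ ^ n) (a ^ n) := by
  induction n with
  | zero => simp [HasJacobiMultiplier, jacobiSlash_one]
  | succ n ih => simpa only [pow_succ] using ih.mul h

theorem zpow (ha : a ≠ 0) (h : HasJacobiMultiplier k m f γ a) (n : ℤ) :
    HasJacobiMultiplier k m f (γ ^ n) (a ^ n) := by
  cases n with
  | ofNat n => simpa using h.pow n
  | negSucc n => simpa only [zpow_negSucc] using (h.pow (n + 1)).inv (pow_ne_zero _ ha)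

theorem conj (ha : a ≠ 0) (hδ : HasJacobiMultiplier k m f δ a)
    (hγ : HasJacobiMultiplier k m f γ b) : HasJacobiMultiplier k m f (δ * γ * δ⁻¹) b := by
  simpa only [mul_comm a b, mul_inv_cancel_right₀ ha] using (hδ.mul hγ).mul (hδ.inv ha)

theorem lowerUnipotent (ha : a ≠ 0) (hb : b ≠ 0) (hS : HasJacobiMultiplier k m f S a)
    (hT : HasJacobiMultiplier k m f T b) (c : ℤ) :
    HasJacobiMultiplier k m f (lowerUnipotent c) (b ^ (-c)) := by
  rw [lowerUnipotent_eq_conj_T_zpow]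
  exact hS.conj ha (hT.zpow hb (-c))

theorem const_smul (c : ℂ) (h : HasJacobiMultiplier k m f γ a) :
    HasJacobiMultiplier k m (c • f) γ a := by
  rw [HasJacobiMultiplier, jacobiSlash_smul, h, smul_comm]

theorem div {k₁ k₂ : ℤ} {m₁ m₂ : ℂ} {g : ℍ → ℂ → ℂ} (hf : HasJacobiMultiplier k₁ m₁ f γ a)
    (hg : HasJacobiMultiplier k₂ m₂ g γ b) :
    HasJacobiMultiplier (k₁ - k₂) (m₁ - m₂) (f / g) γ (a / b) := by
  rw [HasJacobiMultiplier, jacobiSlash_div, hf, hg]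
  ext τ z
  exact mul_div_mul_comm a _ b _

theorem comp_pos_smul {r : {x : ℝ // 0 < x}} (h : HasJacobiMultiplier k (r * m) f δ a)
    (h₀₀ : δ 0 0 = γ 0 0) (h₀₁ : (δ 0 1 : ℝ) = r * γ 0 1) (h₁₀ : r * (δ 1 0 : ℝ) = γ 1 0)
    (h₁₁ : δ 1 1 = γ 1 1) : HasJacobiMultiplier k m (fun τ ↦ f (r • τ)) γ a := by
  ext τ z
  rw [jacobiSlash_comp_pos_smul k m f r h₀₀ h₀₁ h₁₀ h₁₁, h]
  rfl

end HasJacobiMultiplier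

theorem csqrt_sq (w : ℂ) : sqrt w ^ 2 = w := by
  simp [sqrt]

theorem θ₁_add_one (τ z : ℂ) : θ₁ (τ + 1) z = exp (π * I / 4) * θ₁ τ z := by
  simp only [θ₁]
  rw [mul_left_comm, ← tsum_mul_left (a := exp _)]
  refine congrArg (-I * ·) (tsum_congr fun n ↦ ?_)
  rw [mul_left_comm, ← exp_add]
  congr 1
  rw [exp_eq_exp_iff_exists_int]
  -- `(n + 1/2)² - 1/4 = n (n + 1)` is even, so every term picks up the same factor.
  obtain ⟨j, hj⟩ := Int.even_mul_succ_self n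
  have hj' : (n : ℂ) * (n + 1) = j + j := by exact_mod_cast hj
  exact ⟨j, by linear_combination π * I * hj'⟩

theorem θ₁_eq_jacobiTheta₂ (τ z : ℂ) :
    θ₁ τ z = -I * (exp (π * I * (τ / 4 + z)) * jacobiTheta₂ (z + 1 / 2 + τ / 2) τ) := by
  rw [θ₁, jacobiTheta₂, ← tsum_mul_left (a := exp _)]
  refine congrArg (-I * ·) (tsum_congr fun n ↦ ?_)
  rw [jacobiTheta₂_term, ← exp_pi_mul_I, ← exp_int_mul, ← exp_add, ← exp_add]
  congr 1
  ring

theorem θ₁_neg_one_div {τ : ℂ} (hτ : τ ≠ 0) (z : ℂ) :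
    θ₁ (-1 / τ) (z / τ) = -I * sqrt (-I * τ) * exp (π * I * z ^ 2 / τ) * θ₁ τ z := by
  set w := z - 1 / 2 + τ / 2 with hw
  have hleft : z / τ + 1 / 2 + -1 / τ / 2 = w / τ := by
    rw [hw]
    field_simp
    ring
  have hright : jacobiTheta₂ (z + 1 / 2 + τ / 2) τ = jacobiTheta₂ w τ := by
    rw [← jacobiTheta₂_add_left w, hw]
    ring_nf
  have hinv : jacobiTheta₂ w τ =
      1 / sqrt (-I * τ) * exp (-π * I * w ^ 2 / τ) * jacobiTheta₂ (w / τ) (-1 / τ) := by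
    rw [jacobiTheta₂_functional_equation, one_div (2 : ℂ), sqrt]
  have hsqrt : sqrt (-I * τ) ≠ 0 := by simp [sqrt, cpow_eq_zero_iff, hτ]
  have hexp : exp (π * I * (-1 / τ / 4 + z / τ)) =
      -I * exp (π * I * z ^ 2 / τ) * exp (π * I * (τ / 4 + z)) *
        exp (-π * I * w ^ 2 / τ) := by
    rw [← exp_neg_pi_div_two_mul_I, ← exp_add, ← exp_add, ← exp_add, hw]
    congr 1
    field_simp
    ring
  rw [θ₁_eq_jacobiTheta₂ (-1 / τ), θ₁_eq_jacobiTheta₂ τ, hleft, hright, hinv, hexp]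
  generalize sqrt (-I * τ) = s at hsqrt
  field_simp

theorem θ₁_sq_hasJacobiMultiplier_S :
    HasJacobiMultiplier 1 1 (fun τ z ↦ θ₁ τ z ^ 2) S I := by
  ext τ z
  have hexp : exp (-2 * π * I * 1 * z ^ 2 / τ) * exp (π * I * z ^ 2 / τ) ^ 2 = 1 := by
    rw [← exp_nat_mul, ← exp_add, exp_eq_one_iff]
    exact ⟨0, by push_cast; ring⟩
  have hcoeff : (τ : ℂ)⁻¹ * ((-I) ^ 2 * (-I * τ)) = I := by
    rw [neg_sq, I_sq]
    field_simp [ne_zero τ]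
  rw [jacobiSlash_S_coe_apply 1 1 (θ₁ · · ^ 2), θ₁_neg_one_div (ne_zero τ), zpow_neg_one]
  simp only [mul_pow, csqrt_sq, Pi.smul_apply, smul_eq_mul]
  linear_combination
    exp (-2 * π * I * 1 * z ^ 2 / τ) * exp (π * I * z ^ 2 / τ) ^ 2 * θ₁ τ z ^ 2 * hcoeff +
      I * θ₁ τ z ^ 2 * hexp

theorem θ₁_sq_hasJacobiMultiplier_T :
    HasJacobiMultiplier 1 1 (fun τ z ↦ θ₁ τ z ^ 2) T I := by
  ext τ z
  have hroot : exp (π * I / 4) ^ 2 = I := by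
    rw [← exp_nat_mul, show (2 : ℕ) * (π * I / 4) = π / 2 * I by push_cast; ring,
      exp_pi_div_two_mul_I]
  rw [jacobiSlash_T_coe_apply 1 1 (θ₁ · · ^ 2), θ₁_add_one, mul_pow, hroot]
  rfl

theorem Eta_eq_eta (τ : ℂ) : Eta τ = ModularForm.eta τ := by
  simp only [Eta, ModularForm.eta, ModularForm.eta_q_eq_cexp, Function.Periodic.qParam]
  congr 2
  push_cast
  ring

theorem Eta_ne_zero {τ : ℂ} (hτ : 0 < τ.im) : Eta τ ≠ 0 := by
  rw [Eta_eq_eta]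
  exact ModularForm.eta_ne_zero hτ

theorem Eta_neg_one_div {τ : ℂ} (hτ : 0 < τ.im) :
    Eta (-1 / τ) = (sqrt I)⁻¹ * (sqrt τ * Eta τ) := by
  rw [Eta_eq_eta, Eta_eq_eta]
  exact ModularForm.eta_comp_eq_csqrt_I_inv hτ

theorem Eta_add_one (τ : ℂ) : Eta (τ + 1) = exp (π * I / 12) * Eta τ := by
  have hprod (n : ℕ) : exp (2 * π * I * ((n : ℂ) + 1) * (τ + 1)) =
      exp (2 * π * I * ((n : ℂ) + 1) * τ) := by
    rw [exp_eq_exp_iff_exists_int]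
    exact ⟨n + 1, by push_cast; ring⟩
  simp only [Eta, hprod]
  rw [← mul_assoc, ← exp_add]
  ring_nf

theorem Eta_sq_hasJacobiMultiplier_S :
    HasJacobiMultiplier 1 0 (fun τ _ ↦ Eta τ ^ 2) S (-I) := by
  ext τ z
  rw [jacobiSlash_S_coe_apply 1 0 (fun τ _ ↦ Eta τ ^ 2), Eta_neg_one_div τ.im_pos, mul_pow,
    mul_pow, inv_pow, csqrt_sq, csqrt_sq, inv_I, zpow_neg_one]
  have hτ : (τ : ℂ) ≠ 0 := ne_zero τ
  simp only [mul_zero, zero_mul, zero_div, exp_zero, mul_one, Pi.smul_apply, smul_eq_mul]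
  field_simp

theorem Eta_sq_hasJacobiMultiplier_T :
    HasJacobiMultiplier 1 0 (fun τ _ ↦ Eta τ ^ 2) T (exp (π * I / 6)) := by
  ext τ z
  rw [jacobiSlash_T_coe_apply 1 0 (fun τ _ ↦ Eta τ ^ 2), Eta_add_one, mul_pow, ← exp_nat_mul]
  simp only [Pi.smul_apply, smul_eq_mul]
  ring_nf

theorem Eta_three_mul_sq_hasJacobiMultiplier {γ δ : SL(2, ℤ)} {a : ℂ}
    (h : HasJacobiMultiplier 1 0 (fun τ _ ↦ Eta τ ^ 2) δ a) (h₀₀ : δ 0 0 = γ 0 0)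
    (h₀₁ : δ 0 1 = 3 * γ 0 1) (h₁₀ : 3 * δ 1 0 = γ 1 0) (h₁₁ : δ 1 1 = γ 1 1) :
    HasJacobiMultiplier 1 0 (fun τ _ ↦ Eta (3 * τ) ^ 2) γ a := by
  rw [← mul_zero ((3 : ℝ) : ℂ)] at h
  simpa using h.comp_pos_smul (r := ⟨3, three_pos⟩) h₀₀ (by simp [h₀₁]) (by simp [← h₁₀]) h₁₁

theorem Z3b_eq_θ₁_sq_div {τ : ℂ} (hτ : 0 < τ.im) (z : ℂ) :
    Z3b τ z = 2 * (θ₁ τ z ^ 2 / Eta (3 * τ) ^ 2) := by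
  have := Eta_ne_zero hτ
  rw [Z3b, φm21]
  field_simp

theorem Z3b_hasJacobiMultiplier {γ : SL(2, ℤ)} {a b : ℂ}
    (hθ : HasJacobiMultiplier 1 1 (fun τ z ↦ θ₁ τ z ^ 2) γ a)
    (hη : HasJacobiMultiplier 1 0 (fun τ _ ↦ Eta (3 * τ) ^ 2) γ b) :
    HasJacobiMultiplier 0 1 (fun τ ↦ Z3b τ) γ (a / b) := by
  have hZ : (fun τ : ℍ ↦ Z3b τ) =
      (2 : ℂ) • ((fun (τ : ℍ) z ↦ θ₁ τ z ^ 2) / fun (τ : ℍ) _ ↦ Eta (3 * τ) ^ 2) := by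
    ext τ z
    exact Z3b_eq_θ₁_sq_div τ.im_pos z
  rw [hZ]
  simpa only [sub_self, sub_zero] using (hθ.div hη).const_smul 2

theorem Z3b_hasJacobiMultiplier_T : HasJacobiMultiplier 0 1 (fun τ ↦ Z3b τ) T 1 := by
  have hη : HasJacobiMultiplier 1 0 (fun τ _ ↦ Eta (3 * τ) ^ 2) T (exp (π * I / 6) ^ 3) :=
    Eta_three_mul_sq_hasJacobiMultiplier (Eta_sq_hasJacobiMultiplier_T.pow 3) rfl rfl rfl rfl
  have hroot : exp (π * I / 6) ^ 3 = I := by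
    rw [← exp_nat_mul, show (3 : ℕ) * (π * I / 6) = π / 2 * I by push_cast; ring,
      exp_pi_div_two_mul_I]
  simpa only [hroot, div_self I_ne_zero] using
    Z3b_hasJacobiMultiplier θ₁_sq_hasJacobiMultiplier_T hη

theorem Z3b_hasJacobiMultiplier_lowerUnipotent (n : ℤ) :
    HasJacobiMultiplier 0 1 (fun τ ↦ Z3b τ) (lowerUnipotent (3 * n))
      (exp (2 * π * I / 3) ^ n) := by
  have hθ : HasJacobiMultiplier 1 1 (fun τ z ↦ θ₁ τ z ^ 2) (lowerUnipotent (3 * n))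
      (I ^ (-(3 * n))) :=
    θ₁_sq_hasJacobiMultiplier_S.lowerUnipotent I_ne_zero I_ne_zero θ₁_sq_hasJacobiMultiplier_T _
  have hη : HasJacobiMultiplier 1 0 (fun τ _ ↦ Eta (3 * τ) ^ 2) (lowerUnipotent (3 * n))
      (exp (π * I / 6) ^ (-n)) :=
    Eta_three_mul_sq_hasJacobiMultiplier (Eta_sq_hasJacobiMultiplier_S.lowerUnipotent
      (neg_ne_zero.mpr I_ne_zero) (exp_ne_zero _) Eta_sq_hasJacobiMultiplier_T n) rfl rfl rfl rfl
  have hroot : I ^ (-(3 * n)) / exp (π * I / 6) ^ (-n) = exp (2 * π * I / 3) ^ n := by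
    rw [show I ^ (-(3 * n)) = exp (π / 2 * I) ^ (-(3 * n)) by rw [exp_pi_div_two_mul_I],
      ← exp_int_mul, ← exp_int_mul, ← exp_int_mul, ← exp_sub, exp_eq_exp_iff_exists_int]
    exact ⟨-n, by push_cast; ring⟩
  simpa only [hroot] using Z3b_hasJacobiMultiplier hθ hη

theorem Z3b_slash_one_third (τ : ℍ) (z : ℂ) :
    exp (-6 * π * I * z ^ 2 / (3 * τ + 1)) * Z3b (τ / (3 * τ + 1)) (z / (3 * τ + 1)) =
      exp (2 * π * I / 3) * Z3b τ z := by
  have h := congrFun₂ (Z3b_hasJacobiMultiplier_lowerUnipotent 1) τ z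
  rw [jacobiSlash_coe_apply, coe_lowerUnipotent] at h
  rw [show -6 * π * I * z ^ 2 = -2 * π * I * 3 * z ^ 2 by ring]
  simpa using h

theorem Z3b_slash_two_thirds (τ : ℍ) (z : ℂ) :
    exp (6 * π * I * z ^ 2 / (-3 * τ + 1)) *
        Z3b ((-2 * τ + 1) / (-3 * τ + 1)) (z / (-3 * τ + 1)) =
      (exp (2 * π * I / 3))⁻¹ * Z3b τ z := by
  have h := congrFun₂
    (Z3b_hasJacobiMultiplier_T.mul (Z3b_hasJacobiMultiplier_lowerUnipotent (-1))) τ z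
  rw [jacobiSlash_coe_apply, coe_T_mul_lowerUnipotent] at h
  rw [show 6 * π * I * z ^ 2 = 2 * π * I * 3 * z ^ 2 by ring]
  have hentry : (1 : ℂ) + -3 = -2 := by norm_num
  simpa [hentry] using h

end

/-- The sum of the slashes of Z^{3⁸} by M_{1/3} = (1,0;3,1) and M_{2/3} = (−2,1;−3,1)
equals −Z^{3⁸}. -/
theorem Z3b_slash_cusps (τ : ℂ) (hτ : 0 < τ.im) (z : ℂ) :
    Complex.exp (-6 * Real.pi * I * z ^ 2 / (3 * τ + 1)) *
          Z3b (τ / (3 * τ + 1)) (z / (3 * τ + 1)) +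
        Complex.exp (6 * Real.pi * I * z ^ 2 / (-3 * τ + 1)) *
          Z3b ((-2 * τ + 1) / (-3 * τ + 1)) (z / (-3 * τ + 1)) =
      -Z3b τ z := by
  lift τ to UpperHalfPlane using hτ
  have hω : exp (2 * Real.pi * I / 3) + (exp (2 * Real.pi * I / 3))⁻¹ = -1 :=
    add_inv_eq_neg_one_of_isPrimitiveRoot_three (by simpa using isPrimitiveRoot_exp 3 three_ne_zero)
  rw [Z3b_slash_one_third, Z3b_slash_two_thirds, ← add_mul, hω, neg_one_mul]
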